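/- Fix λ > 0, C_u ≥ 0, μ₁ ≥ 0, feature matrices X_p ∈ ℝ^{n_p×m}, X_u ∈ ℝ^{n_u×m}, the stacked matrix X_pu ∈ ℝ^{(n_p+n_u)×m} whose first n_p rows are X_p and last n_u rows are X_u, a symmetric positive semidefinite matrix R ∈ ℝ^{(n_p+n_u)×(n_p+n_u)}, and vectors h, u ∈ ℝ^{n_p}. Define L(β, β₀) = (λ/2)βᵀβ + C_u (1_u + X_uβ + 1_uβ₀)ᵀ(1_u + X_uβ + 1_uβ₀) + (X_puβ + 1_puβ₀)ᵀ R (X_puβ + 1_puβ₀) + uᵀ(1_p − X_pβ − 1_pβ₀ − h) + (μ₁/2)‖1_p − X_pβ − 1_pβ₀ − h‖². With M₁₁ = λI_m + 2C_u X_uᵀX_u + 2X_puᵀR X_pu + μ₁X_pᵀX_p, M₁₂ = 2C_u X_uᵀ1_u + 2X_puᵀR 1_pu + μ₁X_pᵀ1_p, M₂₁ = M₁₂ᵀ, M₂₂ = 2C_u n_u + 2·1_puᵀR 1_pu + μ₁ n_p, m₁ = −2C_u X_uᵀ1_u + X_pᵀu + μ₁X_pᵀ(1_p − h), and m₂ =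 −2C_u n_u + uᵀ1_p + μ₁(1_p − h)ᵀ1_p, a point (β, β₀) ∈ ℝᵐ × ℝ is a global minimizer of L if and only if M₁₁β + M₁₂β₀ = m₁ and M₂₁β + M₂₂β₀ = m₂. -/

import Mathlib

open Matrix

/-- `M₁₁ = λI_m + 2C_u X_uᵀX_u + 2X_puᵀR X_pu + μ₁X_pᵀX_p`. -/
noncomputable def pualM11 (np nu m : ℕ) (lam Cu mu1 : ℝ)
    (Xp : Matrix (Fin np) (Fin m) ℝ) (Xu : Matrix (Fin nu) (Fin m) ℝ)
    (R : Matrix (Fin np ⊕ Fin nu) (Fin np ⊕ Fin nu) ℝ) :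
    Matrix (Fin m) (Fin m) ℝ :=
  lam • (1 : Matrix (Fin m) (Fin m) ℝ) + (2 * Cu) • (Xuᵀ * Xu)
    + (2 : ℝ) • ((Matrix.fromRows Xp Xu)ᵀ * R * Matrix.fromRows Xp Xu)
    + mu1 • (Xpᵀ * Xp)

/-- `M₁₂ = 2C_u X_uᵀ1_u + 2X_puᵀR 1_pu + μ₁X_pᵀ1_p` (an `m × 1` column vector). -/
noncomputable def pualM12 (np nu m : ℕ) (Cu mu1 : ℝ)
    (Xp : Matrix (Fin np) (Fin m) ℝ) (Xu : Matrix (Fin nu) (Fin m) ℝ)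
    (R : Matrix (Fin np ⊕ Fin nu) (Fin np ⊕ Fin nu) ℝ) :
    Fin m → ℝ :=
  (2 * Cu) • Xuᵀ.mulVec (fun _ => 1)
    + (2 : ℝ) • (Matrix.fromRows Xp Xu)ᵀ.mulVec (R.mulVec fun _ => 1)
    + mu1 • Xpᵀ.mulVec (fun _ => 1)

/-- `M₂₂ = 2C_u n_u + 2·1_puᵀR 1_pu + μ₁ n_p` (a scalar). -/
noncomputable def pualM22 (np nu : ℕ) (Cu mu1 : ℝ)
    (R : Matrix (Fin np ⊕ Fin nu) (Fin np ⊕ Fin nu) ℝ) : ℝ :=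
  2 * Cu * (nu : ℝ) + 2 * ((fun _ => (1 : ℝ)) ⬝ᵥ R.mulVec (fun _ => 1))
    + mu1 * (np : ℝ)

/-- `m₁ = −2C_u X_uᵀ1_u + X_pᵀu + μ₁X_pᵀ(1_p − h)`. -/
noncomputable def pualm1 (np nu m : ℕ) (Cu mu1 : ℝ)
    (Xp : Matrix (Fin np) (Fin m) ℝ) (Xu : Matrix (Fin nu) (Fin m) ℝ)
    (h u : Fin np → ℝ) : Fin m → ℝ :=
  -((2 * Cu) • Xuᵀ.mulVec (fun _ => 1)) + Xpᵀ.mulVec u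
    + mu1 • Xpᵀ.mulVec (fun i => 1 - h i)

/-- `m₂ = −2C_u n_u + uᵀ1_p + μ₁(1_p − h)ᵀ1_p`. -/
noncomputable def pualm2 (np nu : ℕ) (Cu mu1 : ℝ) (h u : Fin np → ℝ) : ℝ :=
  -(2 * Cu * (nu : ℝ)) + u ⬝ᵥ (fun _ => 1)
    + mu1 * ((fun i => (1 : ℝ) - h i) ⬝ᵥ (fun _ => 1))

/-- The augmented Lagrangian of PUAL restricted to the `(β, β₀)`-update of ADMM:
`L(β, β₀) = (λ/2)βᵀβ + C_u (1_u + X_uβ + 1_uβ₀)ᵀ(1_u + X_uβ + 1_uβ₀)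
  + (X_puβ + 1_puβ₀)ᵀ R (X_puβ + 1_puβ₀) + uᵀ(1_p − X_pβ − 1_pβ₀ − h)
  + (μ₁/2)‖1_p − X_pβ − 1_pβ₀ − h‖²`. -/
noncomputable def pualL (np nu m : ℕ) (lam Cu mu1 : ℝ)
    (Xp : Matrix (Fin np) (Fin m) ℝ) (Xu : Matrix (Fin nu) (Fin m) ℝ)
    (R : Matrix (Fin np ⊕ Fin nu) (Fin np ⊕ Fin nu) ℝ)
    (h u : Fin np → ℝ) (β : Fin m → ℝ) (β₀ : ℝ) : ℝ :=
  lam / 2 * (β ⬝ᵥ β)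
  + Cu * ((fun i => 1 + Xu.mulVec β i + β₀) ⬝ᵥ (fun i => 1 + Xu.mulVec β i + β₀))
  + ((Matrix.fromRows Xp Xu).mulVec β + fun _ => β₀) ⬝ᵥ
      (R.mulVec ((Matrix.fromRows Xp Xu).mulVec β + fun _ => β₀))
  + u ⬝ᵥ (fun i => 1 - Xp.mulVec β i - β₀ - h i)
  + mu1 / 2 * ((fun i => 1 - Xp.mulVec β i - β₀ - h i) ⬝ᵥ
      (fun i => 1 - Xp.mulVec β i - β₀ - h i))

/-!
Adjoining a constant column to each feature matrix turns `Xβ + 1β₀` into a linear function of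
`z = (β, β₀)`, so that `L(z) = ½ zᵀHz - gᵀz + L(0)`, where `H` is the block matrix of the `Mᵢⱼ` and
`g = (m₁, m₂)`. Restricting such a function to the lines through a point shows that the point is a
global minimizer iff `Hz = g` and `H` is positive semidefinite. For `λ, C_u, μ₁ ≥ 0` and positive
semidefinite `R`, the matrix `H` is a sum of matrices `AᵀSA` with `S` positive semidefinite.
-/

section DotProduct

variable {n α : Type*} [Fintype n]

lemma add_dotProduct_add_self [CommSemiring α] (v w : n → α) :
    (v + w) ⬝ᵥ (v + w) = v ⬝ᵥ v + 2 * (v ⬝ᵥ w) + w ⬝ᵥ w := by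
  rw [add_dotProduct, dotProduct_add, dotProduct_add, dotProduct_comm w v]
  ring

lemma sub_dotProduct_sub_self [CommRing α] (v w : n → α) :
    (v - w) ⬝ᵥ (v - w) = v ⬝ᵥ v - 2 * (v ⬝ᵥ w) + w ⬝ᵥ w := by
  rw [sub_dotProduct, dotProduct_sub, dotProduct_sub, dotProduct_comm w v]
  ring

end DotProduct

section Quadratic

variable {K : Type*} [Field K] [LinearOrder K] [IsStrictOrderedRing K]

lemma forall_mul_self_add_mul_nonneg_iff {a b : K} :
    (∀ t : K, 0 ≤ a * (t * t) + b * t) ↔ b = 0 ∧ 0 ≤ a := by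
  constructor
  · intro h
    have hdiscrim : discrim a b 0 ≤ 0 := discrim_le_zero fun t => by simpa using h t
    have hb : b = 0 := by
      simpa [discrim] using (sq_nonneg b).antisymm' (by simpa [discrim] using hdiscrim)
    exact ⟨hb, by simpa [hb] using h 1⟩
  · rintro ⟨rfl, ha⟩ t
    simpa using mul_nonneg ha (mul_self_nonneg t)

theorem forall_bilinForm_sub_two_mul_le_iff {V : Type*} [AddCommGroup V] [Module K V]
    {B : LinearMap.BilinForm K V} (hB : B.IsSymm) (f : Module.Dual K V) (x : V) :
    (∀ y, B x x - 2 * f x ≤ B y y - 2 * f y) ↔ B x = f ∧ ∀ v, 0 ≤ B v v := by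
  have expand (v : V) :
      B (x + v) (x + v) - 2 * f (x + v) = B x x - 2 * f x + (B v v + 2 * (B x v - f v)) := by
    simp only [map_add, LinearMap.add_apply, hB.eq v x]
    ring
  constructor
  · intro hmin
    have along_line (v : V) : 2 * (B x v - f v) = 0 ∧ 0 ≤ B v v := by
      refine forall_mul_self_add_mul_nonneg_iff.mp fun t => ?_
      have hle := (hmin (x + t • v)).trans_eq (expand (t • v))
      simp only [map_smul, LinearMap.smul_apply, smul_eq_mul] at hle
      linarith
    exact ⟨LinearMap.ext fun v => by linarith [(along_line v).1], fun v => (along_line v).2⟩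
  · rintro ⟨hx, hnonneg⟩ y
    have hy := expand (y - x)
    rw [add_sub_cancel, DFunLike.congr_fun hx (y - x), sub_self, mul_zero, add_zero] at hy
    linarith [hnonneg (y - x)]

theorem forall_dotProduct_mulVec_sub_le_iff {n : Type*} [Fintype n] {H : Matrix n n K}
    (hH : H.IsSymm) (g x : n → K) :
    (∀ y, 1 / 2 * (x ⬝ᵥ H *ᵥ x) - g ⬝ᵥ x ≤ 1 / 2 * (y ⬝ᵥ H *ᵥ y) - g ⬝ᵥ y) ↔
      H *ᵥ x = g ∧ ∀ v, 0 ≤ v ⬝ᵥ H *ᵥ v := by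
  classical
  have hstationary : toBilin' H x = dotProductEquiv K n g ↔ H *ᵥ x = g := by
    rw [← (dotProductEquiv K n).injective.eq_iff, Eq.congr_left]
    refine LinearMap.ext fun v => ?_
    rw [toBilin'_apply', dotProductEquiv_apply_apply, dotProduct_mulVec, ← mulVec_transpose, hH.eq]
  have hbilin := forall_bilinForm_sub_two_mul_le_iff (isSymm_toBilin'_iff_isSymm.mpr hH)
    (dotProductEquiv K n g) x
  simp only [hstationary, toBilin'_apply', dotProductEquiv_apply_apply] at hbilin
  rw [← hbilin]
  refine forall_congr' fun y => ⟨fun h => by linarith, fun h => by linarith⟩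

end Quadratic

section Intercept

variable {k n α : Type*}

/-- The design matrix `[X 1]` of an affine model `β, b ↦ Xβ + 1b`: the intercept `b` is the
coefficient of an additional constant column, indexed by `Unit`. -/
def withIntercept [One α] (X : Matrix k n α) : Matrix k (n ⊕ Unit) α :=
  fromCols X (replicateCol Unit 1)

lemma withIntercept_mulVec_elim [NonAssocSemiring α] [Fintype n] (X : Matrix k n α)
    (β : n → α) (b : α) :
    withIntercept X *ᵥ Sum.elim β (fun _ => b) = X *ᵥ β + fun _ => b := by
  ext i
  simp [withIntercept, mulVec, dotProduct]

lemma transpose_withIntercept_mulVec [NonAssocSemiring α] [Fintype k] (X : Matrix k n α)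
    (v : k → α) :
    (withIntercept X)ᵀ *ᵥ v = Sum.elim (Xᵀ *ᵥ v) (fun _ => 1 ⬝ᵥ v) := by
  ext (i | i) <;> simp [withIntercept, mulVec, dotProduct]

lemma transpose_withIntercept_mul_mul_withIntercept [CommSemiring α] [Fintype k]
    (X : Matrix k n α) {S : Matrix k k α} (hS : S.IsSymm) :
    (withIntercept X)ᵀ * S * withIntercept X =
      fromBlocks (Xᵀ * S * X) (replicateCol Unit (Xᵀ *ᵥ S *ᵥ 1))
        (replicateRow Unit (Xᵀ *ᵥ S *ᵥ 1)) (of fun _ _ => 1 ⬝ᵥ S *ᵥ 1) := by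
  have hrow : replicateRow Unit (1 : k → α) * S * X = replicateRow Unit (Xᵀ *ᵥ S *ᵥ 1) := by
    rw [← replicateRow_vecMul, ← replicateRow_vecMul, mulVec_transpose, ← vecMul_transpose, hS.eq]
  have hcol : Xᵀ * S * replicateCol Unit (1 : k → α) = replicateCol Unit (Xᵀ *ᵥ S *ᵥ 1) := by
    rw [Matrix.mul_assoc, ← replicateCol_mulVec, ← replicateCol_mulVec]
  have hcorner : replicateRow Unit (1 : k → α) * S * replicateCol Unit (1 : k → α) =
      of fun _ _ => 1 ⬝ᵥ S *ᵥ 1 := by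
    rw [Matrix.mul_assoc, ← replicateCol_mulVec, replicateRow_mul_replicateCol]
  rw [withIntercept, transpose_fromCols, transpose_replicateCol, fromRows_mul,
    fromRows_mul_fromCols, hrow, hcol, hcorner]

lemma transpose_withIntercept_mul_withIntercept [CommSemiring α] [Fintype k]
    (X : Matrix k n α) :
    (withIntercept X)ᵀ * withIntercept X =
      fromBlocks (Xᵀ * X) (replicateCol Unit (Xᵀ *ᵥ 1)) (replicateRow Unit (Xᵀ *ᵥ 1))
        (of fun _ _ => (Fintype.card k : α)) := by
  classical
  simpa using transpose_withIntercept_mul_mul_withIntercept X (S := 1) isSymm_one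

end Intercept

section PUAL

variable {np nu m : ℕ}

/-- The coefficient matrix `[M₁₁ M₁₂; M₂₁ M₂₂]` of the normal equations, which is the Hessian
of `pualL` when `R` is symmetric; the `Unit` index is the intercept `β₀`. -/
noncomputable def pualHessian (lam Cu mu1 : ℝ) (Xp : Matrix (Fin np) (Fin m) ℝ)
    (Xu : Matrix (Fin nu) (Fin m) ℝ) (R : Matrix (Fin np ⊕ Fin nu) (Fin np ⊕ Fin nu) ℝ) :
    Matrix (Fin m ⊕ Unit) (Fin m ⊕ Unit) ℝ :=
  fromBlocks (pualM11 np nu m lam Cu mu1 Xp Xu R)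
    (replicateCol Unit (pualM12 np nu m Cu mu1 Xp Xu R))
    (replicateRow Unit (pualM12 np nu m Cu mu1 Xp Xu R)) (of fun _ _ => pualM22 np nu Cu mu1 R)

/-- The right-hand side `(m₁, m₂)` of the normal equations, which is minus the gradient of `pualL`
at the origin. -/
noncomputable def pualRhs (Cu mu1 : ℝ) (Xp : Matrix (Fin np) (Fin m) ℝ)
    (Xu : Matrix (Fin nu) (Fin m) ℝ) (h u : Fin np → ℝ) : Fin m ⊕ Unit → ℝ :=
  Sum.elim (pualm1 np nu m Cu mu1 Xp Xu h u) (fun _ => pualm2 np nu Cu mu1 h u)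

variable {lam Cu mu1 : ℝ} {Xp : Matrix (Fin np) (Fin m) ℝ} {Xu : Matrix (Fin nu) (Fin m) ℝ}
  {R : Matrix (Fin np ⊕ Fin nu) (Fin np ⊕ Fin nu) ℝ}

lemma pualHessian_eq_sum (hR : R.IsSymm) :
    pualHessian lam Cu mu1 Xp Xu R =
      lam • fromBlocks 1 0 0 0 + (2 * Cu) • ((withIntercept Xu)ᵀ * withIntercept Xu)
        + (2 : ℝ) • ((withIntercept (fromRows Xp Xu))ᵀ * R * withIntercept (fromRows Xp Xu))
        + mu1 • ((withIntercept Xp)ᵀ * withIntercept Xp) := by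
  simp only [transpose_withIntercept_mul_mul_withIntercept _ hR,
    transpose_withIntercept_mul_withIntercept, fromBlocks_smul, fromBlocks_add,
    pualHessian, pualM11, ← Pi.one_def, pualM12, pualM22]
  congr 1 <;> ext <;> simp

lemma isSymm_pualHessian (hR : R.IsSymm) : (pualHessian lam Cu mu1 Xp Xu R).IsSymm := by
  rw [pualHessian_eq_sum hR]
  simp only [IsSymm, transpose_add, transpose_smul, transpose_mul, transpose_transpose,
    fromBlocks_transpose, transpose_one, transpose_zero, hR.eq, Matrix.mul_assoc]

lemma posSemidef_pualHessian (hlam : 0 ≤ lam) (hCu : 0 ≤ Cu) (hmu : 0 ≤ mu1)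
    (hR : R.PosSemidef) : (pualHessian lam Cu mu1 Xp Xu R).PosSemidef := by
  have hR_symm : R.IsSymm := isHermitian_iff_isSymm.mp hR.isHermitian
  have hridge : (fromBlocks 1 0 0 0 : Matrix (Fin m ⊕ Unit) (Fin m ⊕ Unit) ℝ).PosSemidef := by
    rw [← diagonal_one, ← diagonal_zero, fromBlocks_diagonal]
    exact .diagonal (by rintro (i | i) <;> simp)
  rw [pualHessian_eq_sum hR_symm]
  exact (((hridge.smul hlam).add
    ((posSemidef_conjTranspose_mul_self (withIntercept Xu)).smul (by positivity))).add
    ((hR.conjTranspose_mul_mul_same (withIntercept (fromRows Xp Xu))).smul zero_le_two)).add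
    ((posSemidef_conjTranspose_mul_self (withIntercept Xp)).smul hmu)

lemma dotProduct_pualHessian_mulVec_elim (hR : R.IsSymm) (β : Fin m → ℝ) (β₀ : ℝ) :
    Sum.elim β (fun _ => β₀) ⬝ᵥ pualHessian lam Cu mu1 Xp Xu R *ᵥ Sum.elim β (fun _ => β₀) =
      lam * (β ⬝ᵥ β) + 2 * Cu * ((Xu *ᵥ β + fun _ => β₀) ⬝ᵥ (Xu *ᵥ β + fun _ => β₀))
        + 2 * ((fromRows Xp Xu *ᵥ β + fun _ => β₀) ⬝ᵥ R *ᵥ (fromRows Xp Xu *ᵥ β + fun _ => β₀))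
        + mu1 * ((Xp *ᵥ β + fun _ => β₀) ⬝ᵥ (Xp *ᵥ β + fun _ => β₀)) := by
  simp only [pualHessian_eq_sum hR, add_mulVec, smul_mulVec, dotProduct_add, dotProduct_smul,
    smul_eq_mul, ← mulVec_mulVec, dotProduct_mulVec _ (_ᵀ), vecMul_transpose,
    withIntercept_mulVec_elim]
  simp [fromBlocks_mulVec]

lemma pualRhs_dotProduct_elim (h u : Fin np → ℝ) (β : Fin m → ℝ) (β₀ : ℝ) :
    pualRhs Cu mu1 Xp Xu h u ⬝ᵥ Sum.elim β (fun _ => β₀) =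
      -(2 * Cu) * (1 ⬝ᵥ (Xu *ᵥ β + fun _ => β₀))
        + (u + mu1 • (1 - h)) ⬝ᵥ (Xp *ᵥ β + fun _ => β₀) := by
  have hrhs : pualRhs Cu mu1 Xp Xu h u =
      -(2 * Cu) • (withIntercept Xu)ᵀ *ᵥ 1 + (withIntercept Xp)ᵀ *ᵥ (u + mu1 • (1 - h)) := by
    have hone_sub : (fun i => 1 - h i) = 1 - h := rfl
    simp only [transpose_withIntercept_mulVec]
    ext (i | i)
    · simp [pualRhs, pualm1, hone_sub, ← Pi.one_def, mulVec_add, mulVec_smul, add_assoc]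
    · simp [pualRhs, pualm2, hone_sub, ← Pi.one_def, dotProduct_comm, add_assoc]
  rw [hrhs, add_dotProduct, smul_dotProduct, mulVec_transpose, mulVec_transpose,
    ← dotProduct_mulVec, ← dotProduct_mulVec, withIntercept_mulVec_elim, withIntercept_mulVec_elim,
    smul_eq_mul]

lemma pualL_eq_sum_residuals (h u : Fin np → ℝ) (β : Fin m → ℝ) (β₀ : ℝ) :
    pualL np nu m lam Cu mu1 Xp Xu R h u β β₀ =
      lam / 2 * (β ⬝ᵥ β)
        + Cu * ((1 + (Xu *ᵥ β + fun _ => β₀)) ⬝ᵥ (1 + (Xu *ᵥ β + fun _ => β₀)))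
        + (fromRows Xp Xu *ᵥ β + fun _ => β₀) ⬝ᵥ R *ᵥ (fromRows Xp Xu *ᵥ β + fun _ => β₀)
        + u ⬝ᵥ (1 - h - (Xp *ᵥ β + fun _ => β₀))
        + mu1 / 2 * ((1 - h - (Xp *ᵥ β + fun _ => β₀)) ⬝ᵥ (1 - h - (Xp *ᵥ β + fun _ => β₀))) := by
  have unlabelled_residual : (fun i => 1 + (Xu *ᵥ β) i + β₀) = 1 + (Xu *ᵥ β + fun _ => β₀) :=
    funext fun i => add_assoc _ _ _
  have positive_residual :
      (fun i => 1 - (Xp *ᵥ β) i - β₀ - h i) = 1 - h - (Xp *ᵥ β + fun _ => β₀) := by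
    ext i
    simp only [Pi.sub_apply, Pi.add_apply, Pi.one_apply]
    ring
  rw [pualL, unlabelled_residual, positive_residual]

lemma pualL_eq_quadratic (hR : R.IsSymm) (h u : Fin np → ℝ) (β : Fin m → ℝ) (β₀ : ℝ) :
    pualL np nu m lam Cu mu1 Xp Xu R h u β β₀ =
      1 / 2 * (Sum.elim β (fun _ => β₀) ⬝ᵥ
          pualHessian lam Cu mu1 Xp Xu R *ᵥ Sum.elim β (fun _ => β₀))
        - pualRhs Cu mu1 Xp Xu h u ⬝ᵥ Sum.elim β (fun _ => β₀)
        + pualL np nu m lam Cu mu1 Xp Xu R h u 0 0 := by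
  have hzero : pualL np nu m lam Cu mu1 Xp Xu R h u 0 0 =
      Cu * (1 ⬝ᵥ (1 : Fin nu → ℝ)) + u ⬝ᵥ (1 - h) + mu1 / 2 * ((1 - h) ⬝ᵥ (1 - h)) := by
    simp only [pualL_eq_sum_residuals, ← Pi.zero_def, mulVec_zero, add_zero, sub_zero,
      dotProduct_zero, mul_zero, zero_add]
  rw [dotProduct_pualHessian_mulVec_elim hR, pualRhs_dotProduct_elim, hzero, pualL_eq_sum_residuals,
    add_dotProduct_add_self, sub_dotProduct_sub_self (1 - h), dotProduct_sub u, add_dotProduct u,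
    smul_dotProduct, smul_eq_mul]
  ring

lemma pualHessian_mulVec_elim_eq_pualRhs_iff {h u : Fin np → ℝ} {β : Fin m → ℝ} {β₀ : ℝ} :
    pualHessian lam Cu mu1 Xp Xu R *ᵥ Sum.elim β (fun _ => β₀) = pualRhs Cu mu1 Xp Xu h u ↔
      (pualM11 np nu m lam Cu mu1 Xp Xu R).mulVec β
          + β₀ • pualM12 np nu m Cu mu1 Xp Xu R = pualm1 np nu m Cu mu1 Xp Xu h u ∧
        pualM12 np nu m Cu mu1 Xp Xu R ⬝ᵥ β + pualM22 np nu Cu mu1 R * β₀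
          = pualm2 np nu Cu mu1 h u := by
  have hcol (v : Fin m → ℝ) : replicateCol Unit v *ᵥ (fun _ => β₀) = β₀ • v := by
    ext i
    simp [mulVec, dotProduct, mul_comm]
  have hcorner (c : ℝ) :
      (of fun _ _ => c : Matrix Unit Unit ℝ) *ᵥ (fun _ => β₀) = fun _ => c * β₀ := by
    ext i
    simp [mulVec, dotProduct]
  rw [pualHessian, pualRhs, fromBlocks_mulVec, Sum.elim_eq_iff, Sum.elim_comp_inl,
    Sum.elim_comp_inr, hcol, hcorner, replicateRow_mulVec_eq_const]
  simp [funext_iff]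

theorem pual_beta_update_characterization_general (hR : R.IsSymm) (h u : Fin np → ℝ)
    (β : Fin m → ℝ) (β₀ : ℝ) :
    (∀ (β' : Fin m → ℝ) (β₀' : ℝ),
        pualL np nu m lam Cu mu1 Xp Xu R h u β β₀
          ≤ pualL np nu m lam Cu mu1 Xp Xu R h u β' β₀')
      ↔
    ((pualM11 np nu m lam Cu mu1 Xp Xu R).mulVec β
        + β₀ • pualM12 np nu m Cu mu1 Xp Xu R = pualm1 np nu m Cu mu1 Xp Xu h u ∧
      pualM12 np nu m Cu mu1 Xp Xu R ⬝ᵥ β + pualM22 np nu Cu mu1 R * β₀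
        = pualm2 np nu Cu mu1 h u) ∧ (pualHessian lam Cu mu1 Xp Xu R).PosSemidef := by
  have hH : (pualHessian lam Cu mu1 Xp Xu R).IsSymm := isSymm_pualHessian hR
  have hpsd : (pualHessian lam Cu mu1 Xp Xu R).PosSemidef ↔
      ∀ z, 0 ≤ z ⬝ᵥ pualHessian lam Cu mu1 Xp Xu R *ᵥ z := by
    simp [posSemidef_iff_dotProduct_mulVec, isHermitian_iff_isSymm, hH]
  let q (z : Fin m ⊕ Unit → ℝ) : ℝ :=
    1 / 2 * (z ⬝ᵥ pualHessian lam Cu mu1 Xp Xu R *ᵥ z) - pualRhs Cu mu1 Xp Xu h u ⬝ᵥ z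
  have pualL_le_iff (β' : Fin m → ℝ) (β₀' : ℝ) :
      pualL np nu m lam Cu mu1 Xp Xu R h u β β₀ ≤ pualL np nu m lam Cu mu1 Xp Xu R h u β' β₀' ↔
        q (Sum.elim β fun _ => β₀) ≤ q (Sum.elim β' fun _ => β₀') := by
    rw [pualL_eq_quadratic hR h u β, pualL_eq_quadratic hR h u β', add_le_add_iff_right]
  have elim_components (z : Fin m ⊕ Unit → ℝ) :
      Sum.elim (z ∘ Sum.inl) (fun _ => z (Sum.inr ())) = z :=
    Sum.elim_comp_inl_inr z
  rw [← pualHessian_mulVec_elim_eq_pualRhs_iff, hpsd, ← forall_dotProduct_mulVec_sub_le_iff hH]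
  simp only [pualL_le_iff]
  exact ⟨fun hmin z => elim_components z ▸ hmin _ _, fun hmin β' β₀' => hmin _⟩

end PUAL

/-- For `λ > 0`, `C_u ≥ 0`, `μ₁ ≥ 0` and symmetric positive semidefinite `R`, a point
`(β, β₀)` is a global minimizer of the augmented Lagrangian `L` iff
`M₁₁β + M₁₂β₀ = m₁` and `M₂₁β + M₂₂β₀ = m₂` (with `M₂₁ = M₁₂ᵀ`). -/
theorem pual_beta_update_characterization (np nu m : ℕ) (lam Cu mu1 : ℝ)
    (hlam : 0 < lam) (hCu : 0 ≤ Cu) (hmu : 0 ≤ mu1)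
    (Xp : Matrix (Fin np) (Fin m) ℝ) (Xu : Matrix (Fin nu) (Fin m) ℝ)
    (R : Matrix (Fin np ⊕ Fin nu) (Fin np ⊕ Fin nu) ℝ) (hRsymm : R.IsSymm)
    (hRpsd : ∀ v : Fin np ⊕ Fin nu → ℝ, 0 ≤ v ⬝ᵥ R.mulVec v)
    (h u : Fin np → ℝ) (β : Fin m → ℝ) (β₀ : ℝ) :
    (∀ (β' : Fin m → ℝ) (β₀' : ℝ),
        pualL np nu m lam Cu mu1 Xp Xu R h u β β₀
          ≤ pualL np nu m lam Cu mu1 Xp Xu R h u β' β₀')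
      ↔
    ((pualM11 np nu m lam Cu mu1 Xp Xu R).mulVec β
        + β₀ • pualM12 np nu m Cu mu1 Xp Xu R = pualm1 np nu m Cu mu1 Xp Xu h u ∧
      pualM12 np nu m Cu mu1 Xp Xu R ⬝ᵥ β + pualM22 np nu Cu mu1 R * β₀
        = pualm2 np nu Cu mu1 h u) := by
  have hR : R.PosSemidef :=
    .of_dotProduct_mulVec_nonneg (isHermitian_iff_isSymm.mpr hRsymm) hRpsd
  rw [pual_beta_update_characterization_general hRsymm,
    and_iff_left (posSemidef_pualHessian hlam.le hCu hmu hR)]
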